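/- arXiv:2106.01155 — 3 statements merged into one kernel-verified Lean document; each statement's English description precedes it below -/
import Mathlib

section
/- Let U be a unital commutative associative algebra over F and α ∈ U. Then M̃(sl2(U), α) is a Malcev algebra over F (its product is anticommutative with X·X = 0 and satisfies the Malcev identity (XZ)(YT) = ((XY)Z)T + ((YZ)T)X + ((ZT)X)Y + ((TX)Y)Z), and it contains sl2(U) as a subalgebra. -/
section
variable (K : Type*) [Field K] (B : Type*) [CommRing B] [Algebra K B]

/-- `sl2(B)`: trace-zero 2×2 matrices over `B` -/
def sl2T (B : Type*) [CommRing B] : Submodule B (Matrix (Fin 2) (Fin 2) B) :=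
  LinearMap.ker (Matrix.traceLinearMap (Fin 2) B B)

lemma comm_mem_sl2T {B : Type*} [CommRing B] (A A' : Matrix (Fin 2) (Fin 2) B) :
    A * A' - A' * A ∈ sl2T B := by
  rw [sl2T, LinearMap.mem_ker, Matrix.traceLinearMap_apply, Matrix.trace_sub,
    Matrix.trace_mul_comm, sub_self]

variable (V : Type*) [AddCommGroup V] [Module B V]

/-- the right action `(u,v)A = (au − bv, cu − av)` for `A = (1/2)[[a,−b],[c,−a]]` -/
def actV {B V : Type*} [CommRing B] [AddCommGroup V] [Module B V]
    (A : Matrix (Fin 2) (Fin 2) B) (p : V × V) : V × V :=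
  ((2 : B) • (A 0 0 • p.1 + A 0 1 • p.2), (2 : B) • (A 1 0 • p.1 - A 0 0 • p.2))

/-- the `sl2(B)`-component of the product on `sl2(B) ⊕ V²` -/
noncomputable def conMulMat (bk : V → V → B)
    (X Y : ↥(sl2T B) × V × V) : Matrix (Fin 2) (Fin 2) B :=
  (X.1 : Matrix (Fin 2) (Fin 2) B) * (Y.1 : Matrix (Fin 2) (Fin 2) B) -
    (Y.1 : Matrix (Fin 2) (Fin 2) B) * (X.1 : Matrix (Fin 2) (Fin 2) B) +
    algebraMap K B 2⁻¹ •
      !![algebraMap K B 2⁻¹ * (bk X.2.1 Y.2.2 + bk X.2.2 Y.2.1), -(bk X.2.1 Y.2.1);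
         bk X.2.2 Y.2.2, -(algebraMap K B 2⁻¹ * (bk X.2.1 Y.2.2 + bk X.2.2 Y.2.1))]

lemma conMulMat_mem (bk : V → V → B) (X Y : ↥(sl2T B) × V × V) :
    conMulMat K B V bk X Y ∈ sl2T B := by
  rw [sl2T, LinearMap.mem_ker, Matrix.traceLinearMap_apply, conMulMat, Matrix.trace_add,
    Matrix.trace_sub, Matrix.trace_mul_comm, Matrix.trace_smul, Matrix.trace_fin_two]
  simp

/-- the product of the construction `sl2(B) ⊕ V²` -/
noncomputable def conMul (bk : V → V → B) (X Y : ↥(sl2T B) × V × V) :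
    ↥(sl2T B) × V × V :=
  (⟨conMulMat K B V bk X Y, conMulMat_mem K B V bk X Y⟩,
    actV (Y.1 : Matrix (Fin 2) (Fin 2) B) X.2 - actV (X.1 : Matrix (Fin 2) (Fin 2) B) Y.2)

/-- the symplectic involution on `M₂(B)` -/
def sympl {B : Type*} [CommRing B] (A : Matrix (Fin 2) (Fin 2) B) : Matrix (Fin 2) (Fin 2) B :=
  !![A 1 1, -(A 0 1); -(A 1 0), A 0 0]

/-- the `sl2(B)`-component of the product of `M̃(sl2(B), α)` -/
def mtMulMat {B : Type*} [CommRing B] (α : B)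
    (X Y : ↥(sl2T B) × Matrix (Fin 2) (Fin 2) B) : Matrix (Fin 2) (Fin 2) B :=
  (X.1 : Matrix (Fin 2) (Fin 2) B) * (Y.1 : Matrix (Fin 2) (Fin 2) B) -
    (Y.1 : Matrix (Fin 2) (Fin 2) B) * (X.1 : Matrix (Fin 2) (Fin 2) B) +
    α • (Y.2 * sympl X.2 - X.2 * sympl Y.2)

lemma mtMulMat_mem {B : Type*} [CommRing B] (α : B)
    (X Y : ↥(sl2T B) × Matrix (Fin 2) (Fin 2) B) : mtMulMat α X Y ∈ sl2T B := by
  have h2 : Matrix.trace (α • (Y.2 * sympl X.2 - X.2 * sympl Y.2)) = 0 := by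
    rw [Matrix.trace_smul, Matrix.trace_sub, Matrix.trace_fin_two, Matrix.trace_fin_two]
    simp [Matrix.mul_apply, Fin.sum_univ_two, sympl]
    ring_nf
  rw [sl2T, LinearMap.mem_ker, Matrix.traceLinearMap_apply, mtMulMat, Matrix.trace_add,
    Matrix.trace_sub, Matrix.trace_mul_comm, sub_self, zero_add, h2]

/-- the product of `M̃(sl2(B), α) = sl2(B) ⊕ vM₂(B)`:
`A·B = AB − BA`, `A·(vB) = v(A*B − AB)`, `(vA)·(vB) = α(BA* − AB*)`. -/
def mtMul {B : Type*} [CommRing B] (α : B)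
    (X Y : ↥(sl2T B) × Matrix (Fin 2) (Fin 2) B) :
    ↥(sl2T B) × Matrix (Fin 2) (Fin 2) B :=
  (⟨mtMulMat α X Y, mtMulMat_mem α X Y⟩,
    sympl (X.1 : Matrix (Fin 2) (Fin 2) B) * Y.2 - (X.1 : Matrix (Fin 2) (Fin 2) B) * Y.2 +
      ((Y.1 : Matrix (Fin 2) (Fin 2) B) * X.2 - sympl (Y.1 : Matrix (Fin 2) (Fin 2) B) * X.2))

/-- the product of the exceptional Malcev algebra `M₇(B) = sl2(B) ⊕ vM₂(B)` -/
def m7Mul {B : Type*} [CommRing B] (X Y : ↥(sl2T B) × Matrix (Fin 2) (Fin 2) B) :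
    ↥(sl2T B) × Matrix (Fin 2) (Fin 2) B := mtMul (1 : B) X Y


section
variable {K : Type*} [Field K] {U : Type*} [CommRing U] [Algebra K U]

/-!
The product of `M̃(sl₂(U), α)` is the commutator of the Cayley–Dickson double of `M₂(U)`, restricted
to `sl₂(U) ⊕ vM₂(U)`. The symplectic involution is the adjugate, so it has central traces and norms,
and the double is therefore an alternative ring. In an alternative ring the Jacobian of the
commutator is six times the associator, and the defect of the Malcev identity is a sum of Jacobians.
That sum vanishes because the Kleinfeld function
`f(w, x, y, z) = (wx, y, z) - x(w, y, z) - (x, y, z)w` is skew-symmetric and `3f` is the alternating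
sum of the commutators `[w, (x, y, z)]`.
-/

section Commutator

variable {A : Type*} [NonUnitalNonAssocRing A]

/-- The Jacobian of the commutator, which measures the failure of the Jacobi identity. -/
def jacobian (x y z : A) : A := ⁅⁅x, y⁆, z⁆ + ⁅⁅y, z⁆, x⁆ + ⁅⁅z, x⁆, y⁆

theorem jacobian_eq_associator (x y z : A) :
    jacobian x y z =
      associator x y z + associator y z x + associator z x y -
        (associator y x z + associator x z y + associator z y x) := by
  simp only [jacobian, Ring.lie_def, associator, mul_sub, sub_mul]
  abel

theorem malcev_defect_eq_sum_jacobian (x y z t : A) :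
    ⁅⁅⁅x, y⁆, z⁆, t⁆ + ⁅⁅⁅y, z⁆, t⁆, x⁆ + ⁅⁅⁅z, t⁆, x⁆, y⁆ + ⁅⁅⁅t, x⁆, y⁆, z⁆ - ⁅⁅x, z⁆, ⁅y, t⁆⁆ =
      jacobian ⁅x, z⁆ y t + ⁅jacobian x y z, t⁆ + ⁅jacobian x z t, y⁆ +
        jacobian ⁅y, z⁆ t x + jacobian ⁅t, x⁆ y z := by
  simp only [jacobian, Ring.lie_def, mul_sub, sub_mul, mul_add, add_mul]
  abel

/-- The Kleinfeld function of a nonassociative ring; in an alternative ring it is skew-symmetric,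
which is how the associators of products are controlled. -/
def kleinfeld (w x y z : A) : A :=
  associator (w * x) y z - x * associator w y z - associator x y z * w

end Commutator

/-- Alternative rings: nonassociative rings satisfying the left and right alternative laws. -/
class IsAlternative (A : Type*) [NonUnitalNonAssocRing A] : Prop where
  mul_self_mul (x y : A) : x * x * y = x * (x * y)
  mul_mul_self (x y : A) : y * x * x = y * (x * x)

namespace IsAlternative

variable {A : Type*} [NonUnitalNonAssocRing A] [IsAlternative A]

theorem associator_self_left (x y : A) : associator x x y = 0 :=
  sub_eq_zero.mpr (mul_self_mul x y)

theorem associator_self_right (x y : A) : associator y x x = 0 :=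
  sub_eq_zero.mpr (mul_mul_self x y)

theorem associator_swap_left (x y z : A) : associator y x z = -associator x y z := by
  rw [eq_neg_iff_add_eq_zero]
  calc associator y x z + associator x y z
      = associator (x + y) (x + y) z - associator x x z - associator y y z := by
        simp only [associator, add_mul, mul_add]
        abel
    _ = 0 := by simp only [associator_self_left, sub_zero]

theorem associator_swap_right (x y z : A) : associator x z y = -associator x y z := by
  rw [eq_neg_iff_add_eq_zero]
  calc associator x z y + associator x y z
      = associator x (y + z) (y + z) - associator x y y - associator x z z := by
        simp only [associator, add_mul, mul_add]
        abel
    _ = 0 := by simp only [associator_self_right, sub_zero]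

theorem associator_rotate (x y z : A) : associator y z x = associator x y z := by
  rw [associator_swap_right, associator_swap_left, neg_neg]

theorem jacobian_eq_six_nsmul_associator (x y z : A) : jacobian x y z = 6 • associator x y z := by
  rw [jacobian_eq_associator, associator_rotate, ← associator_rotate z x y,
    associator_swap_left x y z, associator_swap_right x y z, associator_swap_left y z x,
    associator_rotate x y z]
  abel

theorem kleinfeld_swap_right (w x y z : A) : kleinfeld w x z y = -kleinfeld w x y z := by
  simp only [kleinfeld, associator_swap_right _ y z, mul_neg, neg_mul]
  abel

theorem kleinfeld_cocycle (w x y z : A) :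
    kleinfeld w x y z - kleinfeld x y z w + kleinfeld y z w x =
      ⁅w, associator x y z⁆ - ⁅x, associator w y z⁆ + ⁅y, associator w x z⁆ -
        ⁅z, associator w x y⁆ := by
  simp only [kleinfeld, Ring.lie_def, associator_rotate w y z, associator_rotate w x z,
    ← associator_rotate z w x, ← associator_rotate y w x, associator_rotate w (x * y) z,
    ← associator_rotate (y * z) w x]
  linear_combination (norm := abel) -associator_cocycle w x y z

-- The right-hand side of `kleinfeld_cocycle` changes sign when its arguments are rotated.
theorem kleinfeld_rotate (w x y z : A) : kleinfeld x y z w = -kleinfeld w x y z := by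
  have rotated := kleinfeld_cocycle y z w x
  simp only [associator_rotate x] at rotated
  linear_combination (norm := abel) kleinfeld_cocycle x y z w + rotated

theorem kleinfeld_swap_middle (w x y z : A) : kleinfeld w y x z = -kleinfeld w x y z := by
  rw [kleinfeld_rotate z w y x, kleinfeld_swap_right z w x y, kleinfeld_rotate z w x y]

theorem kleinfeld_swap_left (w x y z : A) : kleinfeld x w y z = -kleinfeld w x y z := by
  rw [kleinfeld_rotate z x w y, kleinfeld_swap_middle z w x y, kleinfeld_rotate z w x y]

theorem three_nsmul_kleinfeld (w x y z : A) :
    3 • kleinfeld w x y z =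
      ⁅w, associator x y z⁆ - ⁅x, associator w y z⁆ + ⁅y, associator w x z⁆ -
        ⁅z, associator w x y⁆ := by
  rw [← kleinfeld_cocycle, kleinfeld_rotate x y z w, kleinfeld_rotate w x y z]
  abel

theorem associator_lie (w x y z : A) :
    associator ⁅w, x⁆ y z =
      2 • kleinfeld w x y z + ⁅x, associator w y z⁆ - ⁅w, associator x y z⁆ := by
  have associator_sub_left :
      associator ⁅w, x⁆ y z = associator (w * x) y z - associator (x * w) y z := by
    simp only [associator, Ring.lie_def, sub_mul]
    abel
  have swap := kleinfeld_swap_left w x y z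
  simp only [kleinfeld] at swap ⊢
  rw [associator_sub_left]
  simp only [Ring.lie_def]
  linear_combination (norm := abel) -swap

theorem sum_associator_lie_eq_zero (x y z t : A) :
    associator ⁅x, z⁆ y t + ⁅associator x y z, t⁆ + ⁅associator x z t, y⁆ +
      associator ⁅y, z⁆ t x + associator ⁅t, x⁆ y z = 0 := by
  have hxz : associator ⁅x, z⁆ y t =
      -(2 • kleinfeld x y z t) + ⁅z, associator x y t⁆ + ⁅x, associator y z t⁆ := by
    rw [associator_lie, kleinfeld_swap_middle, associator_swap_left y z t]
    simp only [Ring.lie_def, mul_neg, neg_mul]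
    abel
  have hyz : associator ⁅y, z⁆ t x =
      -(2 • kleinfeld x y z t) + ⁅z, associator x y t⁆ - ⁅y, associator x z t⁆ := by
    rw [associator_lie, kleinfeld_rotate x y z t, associator_rotate x y t, associator_rotate x z t]
    abel
  have htx : associator ⁅t, x⁆ y z =
      -(2 • kleinfeld x y z t) + ⁅x, associator y z t⁆ - ⁅t, associator x y z⁆ := by
    rw [associator_lie, kleinfeld_rotate t x y z, ← associator_rotate t y z]
    abel
  calc _ = 2 • (⁅x, associator y z t⁆ - ⁅y, associator x z t⁆ + ⁅z, associator x y t⁆ -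
        ⁅t, associator x y z⁆) - 2 • 3 • kleinfeld x y z t := by
        rw [hxz, hyz, htx]
        simp only [Ring.lie_def]
        abel
    _ = 0 := by rw [three_nsmul_kleinfeld, sub_self]

theorem malcev_identity (x y z t : A) :
    ⁅⁅x, z⁆, ⁅y, t⁆⁆ =
      ⁅⁅⁅x, y⁆, z⁆, t⁆ + ⁅⁅⁅y, z⁆, t⁆, x⁆ + ⁅⁅⁅z, t⁆, x⁆, y⁆ + ⁅⁅⁅t, x⁆, y⁆, z⁆ := by
  symm
  rw [← sub_eq_zero, malcev_defect_eq_sum_jacobian]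
  simp only [jacobian_eq_six_nsmul_associator]
  calc _ = 6 • (associator ⁅x, z⁆ y t + ⁅associator x y z, t⁆ + ⁅associator x z t, y⁆ +
        associator ⁅y, z⁆ t x + associator ⁅t, x⁆ y z) := by
        simp only [Ring.lie_def, nsmul_add, nsmul_sub, smul_mul_assoc, mul_smul_comm]
    _ = 0 := by rw [sum_associator_lie_eq_zero, nsmul_zero]

end IsAlternative

section CayleyDickson

variable {R A : Type*} [CommRing R] [NonUnitalRing A] [Module R A]

/-- An involution whose traces `a + σ a` and norms `a * σ a` are central, the kind of involution
that can be fed to the Cayley–Dickson process. -/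
structure IsCentralInvolution (σ : A →ₗ[R] A) : Prop where
  involutive : Function.Involutive σ
  map_mul (a b : A) : σ (a * b) = σ b * σ a
  commute_trace (a b : A) : Commute (a + σ a) b
  commute_norm (a b : A) : Commute (a * σ a) b

/-- The Cayley–Dickson double `A ⊕ vA` with `v² = α`; the element `a + vb` is encoded as `⟨a, b⟩`.
The involution and the scalar are part of the type because the product depends on them. -/
@[ext]
structure CayleyDickson (σ : A →ₗ[R] A) (α : R) where
  fst : A
  snd : A

variable {σ : A →ₗ[R] A} {α : R}

namespace CayleyDickson

/-- The underlying pair of an element of the double, used to transport the additive structure. -/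
def equivProd : CayleyDickson σ α ≃ A × A where
  toFun x := (x.fst, x.snd)
  invFun p := ⟨p.1, p.2⟩

instance : AddCommGroup (CayleyDickson σ α) := equivProd.addCommGroup

instance : Mul (CayleyDickson σ α) where
  mul x y := ⟨x.1 * y.1 + α • (y.2 * σ x.2), σ x.1 * y.2 + y.1 * x.2⟩

theorem fst_add (x y : CayleyDickson σ α) : (x + y).1 = x.1 + y.1 := rfl

theorem snd_add (x y : CayleyDickson σ α) : (x + y).2 = x.2 + y.2 := rfl

theorem fst_sub (x y : CayleyDickson σ α) : (x - y).1 = x.1 - y.1 := rfl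

theorem snd_sub (x y : CayleyDickson σ α) : (x - y).2 = x.2 - y.2 := rfl

theorem fst_mul (x y : CayleyDickson σ α) : (x * y).1 = x.1 * y.1 + α • (y.2 * σ x.2) := rfl

theorem snd_mul (x y : CayleyDickson σ α) : (x * y).2 = σ x.1 * y.2 + y.1 * x.2 := rfl

instance : Distrib (CayleyDickson σ α) where
  left_distrib x y z := by
    ext <;> simp only [fst_add, snd_add, fst_mul, snd_mul, mul_add, add_mul, smul_add] <;> abel
  right_distrib x y z := by
    ext <;>
      simp only [fst_add, snd_add, fst_mul, snd_mul, map_add, mul_add, add_mul, smul_add] <;> abel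

instance : NonUnitalNonAssocRing (CayleyDickson σ α) where
  zero_mul x := add_eq_left.mp ((add_mul 0 0 x).symm.trans (congrArg (· * x) (add_zero 0)))
  mul_zero x := add_eq_left.mp ((mul_add x 0 0).symm.trans (congrArg (x * ·) (add_zero 0)))

/-- The conjugation `a + vb ↦ σ a - vb` of the double; it reverses products, so it exchanges
the left and right alternative laws. -/
def conj (x : CayleyDickson σ α) : CayleyDickson σ α := ⟨σ x.1, -x.2⟩

theorem conj_conj (h : IsCentralInvolution σ) (x : CayleyDickson σ α) : x.conj.conj = x :=
  CayleyDickson.ext (h.involutive x.1) (neg_neg x.2)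

theorem conj_mul (h : IsCentralInvolution σ) (x y : CayleyDickson σ α) :
    (x * y).conj = y.conj * x.conj := by
  ext
  · simp only [conj, fst_mul, map_add, map_smul, map_neg, h.map_mul, h.involutive _, neg_mul_neg]
  · simp only [conj, snd_mul, h.involutive _, mul_neg]
    abel

end CayleyDickson

namespace IsCentralInvolution

theorem trace_mul_comm (h : IsCentralInvolution σ) (a b : A) :
    a * b + σ a * b = b * a + b * σ a := by
  rw [← add_mul, h.commute_trace, mul_add]

theorem map_mul_self (h : IsCentralInvolution σ) (a : A) : σ a * a = a * σ a :=
  add_left_cancel (h.trace_mul_comm a a)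

variable [IsScalarTower R A A] [SMulCommClass R A A]

theorem cayleyDickson_mul_self_mul (h : IsCentralInvolution σ) (x y : CayleyDickson σ α) :
    x * x * y = x * (x * y) := by
  obtain ⟨a, b⟩ := x
  obtain ⟨c, d⟩ := y
  ext
  · have trace_comm := h.trace_mul_comm a (d * σ b)
    have norm_comm : b * σ b * c = c * (b * σ b) := h.commute_norm b c
    simp only [mul_assoc] at trace_comm norm_comm
    simp only [CayleyDickson.fst_mul, CayleyDickson.snd_mul, map_add, h.map_mul, h.involutive _,
      add_mul, mul_add, smul_mul_assoc, mul_smul_comm, smul_add, mul_assoc]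
    linear_combination (norm := module) α • norm_comm - α • trace_comm
  · have trace_comm := congrArg (· * b) (h.trace_mul_comm a c)
    have norm_comm : b * σ b * d = d * (σ b * b) := by rw [h.commute_norm, h.map_mul_self]
    simp only [add_mul, mul_assoc] at trace_comm norm_comm
    simp only [CayleyDickson.fst_mul, CayleyDickson.snd_mul, map_add, map_smul, h.map_mul,
      h.involutive _, add_mul, mul_add, smul_mul_assoc, mul_assoc]
    linear_combination (norm := module) α • norm_comm - trace_comm

theorem isAlternative_cayleyDickson (h : IsCentralInvolution σ) :
    IsAlternative (CayleyDickson σ α) where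
  mul_self_mul := h.cayleyDickson_mul_self_mul
  mul_mul_self x y := by
    have conj_left := congrArg CayleyDickson.conj (h.cayleyDickson_mul_self_mul x.conj y.conj)
    simpa only [CayleyDickson.conj_mul h, CayleyDickson.conj_conj h] using conj_left.symm

end IsCentralInvolution

end CayleyDickson

section SymplecticDouble

/-- The symplectic involution `sympl` of `M₂(U)` as a `U`-linear map. -/
def symplLinearMap (U : Type*) [CommRing U] :
    Matrix (Fin 2) (Fin 2) U →ₗ[U] Matrix (Fin 2) (Fin 2) U where
  toFun := sympl
  map_add' A B := by simp [sympl, add_comm]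
  map_smul' c A := by simp [sympl]

theorem symplLinearMap_apply (A : Matrix (Fin 2) (Fin 2) U) : symplLinearMap U A = sympl A := rfl

theorem sympl_eq_adjugate (A : Matrix (Fin 2) (Fin 2) U) : sympl A = A.adjugate :=
  (Matrix.adjugate_fin_two A).symm

theorem add_sympl (A : Matrix (Fin 2) (Fin 2) U) : A + sympl A = Matrix.scalar (Fin 2) A.trace := by
  ext i j
  fin_cases i <;> fin_cases j <;> simp [sympl, Matrix.trace_fin_two, add_comm]

theorem isCentralInvolution_symplLinearMap : IsCentralInvolution (symplLinearMap U) where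
  involutive A := by simp [symplLinearMap_apply, sympl, ← Matrix.eta_fin_two]
  map_mul A B := by
    simp only [symplLinearMap_apply, sympl_eq_adjugate, Matrix.adjugate_mul_distrib]
  commute_trace A B := by
    rw [symplLinearMap_apply, add_sympl]
    exact Matrix.scalar_commute _ (mul_comm _) B
  commute_norm A B := by
    rw [symplLinearMap_apply, sympl_eq_adjugate, Matrix.mul_adjugate]
    exact (Commute.one_left B).smul_left _

instance (α : U) : IsAlternative (CayleyDickson (symplLinearMap U) α) :=
  isCentralInvolution_symplLinearMap.isAlternative_cayleyDickson

/-- The inclusion of `M̃(sl₂(U), α)` into the Cayley–Dickson double of `M₂(U)`. -/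
def toCayleyDickson (α : U) :
    ↥(sl2T U) × Matrix (Fin 2) (Fin 2) U →+ CayleyDickson (symplLinearMap U) α where
  toFun X := ⟨X.1, X.2⟩
  map_zero' := rfl
  map_add' _ _ := rfl

theorem toCayleyDickson_apply (α : U) (X : ↥(sl2T U) × Matrix (Fin 2) (Fin 2) U) :
    toCayleyDickson α X = ⟨X.1, X.2⟩ := rfl

theorem toCayleyDickson_injective (α : U) : Function.Injective (toCayleyDickson α) :=
  fun _ _ h => Prod.ext (Subtype.ext (congrArg CayleyDickson.fst h)) (congrArg CayleyDickson.snd h)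

theorem toCayleyDickson_mtMul (α : U) (X Y : ↥(sl2T U) × Matrix (Fin 2) (Fin 2) U) :
    toCayleyDickson α (mtMul α X Y) = ⁅toCayleyDickson α X, toCayleyDickson α Y⁆ := by
  rw [Ring.lie_def]
  ext : 1
  · simp only [toCayleyDickson_apply, CayleyDickson.fst_sub,
      CayleyDickson.fst_mul, symplLinearMap_apply, mtMul, mtMulMat, smul_sub]
    abel
  · simp only [toCayleyDickson_apply, CayleyDickson.snd_sub,
      CayleyDickson.snd_mul, symplLinearMap_apply, mtMul]
    abel

theorem mtMul_self (α : U) (X : ↥(sl2T U) × Matrix (Fin 2) (Fin 2) U) : mtMul α X X = 0 :=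
  toCayleyDickson_injective α <| by
    rw [toCayleyDickson_mtMul, Ring.lie_def, sub_self, map_zero]

theorem mtMul_anticomm (α : U) (X Y : ↥(sl2T U) × Matrix (Fin 2) (Fin 2) U) :
    mtMul α X Y = -mtMul α Y X :=
  toCayleyDickson_injective α <| by
    simp only [map_neg, toCayleyDickson_mtMul, Ring.lie_def, neg_sub]

theorem mtMul_malcev_identity (α : U) (X Y Z W : ↥(sl2T U) × Matrix (Fin 2) (Fin 2) U) :
    mtMul α (mtMul α X Z) (mtMul α Y W) =
      mtMul α (mtMul α (mtMul α X Y) Z) W + mtMul α (mtMul α (mtMul α Y Z) W) X +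
        mtMul α (mtMul α (mtMul α Z W) X) Y + mtMul α (mtMul α (mtMul α W X) Y) Z :=
  toCayleyDickson_injective α <| by
    simp only [map_add, toCayleyDickson_mtMul]
    exact IsAlternative.malcev_identity _ _ _ _

theorem mtMul_sl2T (α : U) (A A' : ↥(sl2T U)) :
    mtMul α (A, (0 : Matrix (Fin 2) (Fin 2) U)) (A', (0 : Matrix (Fin 2) (Fin 2) U)) =
      (⟨(A : Matrix (Fin 2) (Fin 2) U) * (A' : Matrix (Fin 2) (Fin 2) U) -
          (A' : Matrix (Fin 2) (Fin 2) U) * (A : Matrix (Fin 2) (Fin 2) U),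
        comm_mem_sl2T _ _⟩, (0 : Matrix (Fin 2) (Fin 2) U)) := by
  simp [mtMul, mtMulMat]

end SymplecticDouble

theorem stmt13_general (α : U) :
    (∀ X : ↥(sl2T U) × Matrix (Fin 2) (Fin 2) U, mtMul α X X = 0) ∧
    (∀ X Y : ↥(sl2T U) × Matrix (Fin 2) (Fin 2) U, mtMul α X Y = -(mtMul α Y X)) ∧
    (∀ X Y Z W : ↥(sl2T U) × Matrix (Fin 2) (Fin 2) U,
      mtMul α (mtMul α X Z) (mtMul α Y W) =
        mtMul α (mtMul α (mtMul α X Y) Z) W +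
        mtMul α (mtMul α (mtMul α Y Z) W) X +
        mtMul α (mtMul α (mtMul α Z W) X) Y +
        mtMul α (mtMul α (mtMul α W X) Y) Z) ∧
    (∀ A A' : ↥(sl2T U),
      mtMul α (A, (0 : Matrix (Fin 2) (Fin 2) U)) (A', (0 : Matrix (Fin 2) (Fin 2) U)) =
        (⟨(A : Matrix (Fin 2) (Fin 2) U) * (A' : Matrix (Fin 2) (Fin 2) U) -
            (A' : Matrix (Fin 2) (Fin 2) U) * (A : Matrix (Fin 2) (Fin 2) U),
          comm_mem_sl2T _ _⟩, (0 : Matrix (Fin 2) (Fin 2) U))) :=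
  ⟨mtMul_self α, mtMul_anticomm α, mtMul_malcev_identity α, mtMul_sl2T α⟩

/-- For a unital commutative associative `F`-algebra `U` and `α ∈ U`,
`M̃(sl₂(U), α)` is a Malcev algebra over `F` containing `sl₂(U)` as a subalgebra. -/
theorem stmt13
    (h2 : (2 : K) ≠ 0) (h3 : (3 : K) ≠ 0) (α : U) :
    (∀ X : ↥(sl2T U) × Matrix (Fin 2) (Fin 2) U, mtMul α X X = 0) ∧
    (∀ X Y : ↥(sl2T U) × Matrix (Fin 2) (Fin 2) U, mtMul α X Y = -(mtMul α Y X)) ∧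
    (∀ X Y Z W : ↥(sl2T U) × Matrix (Fin 2) (Fin 2) U,
      mtMul α (mtMul α X Z) (mtMul α Y W) =
        mtMul α (mtMul α (mtMul α X Y) Z) W +
        mtMul α (mtMul α (mtMul α Y Z) W) X +
        mtMul α (mtMul α (mtMul α Z W) X) Y +
        mtMul α (mtMul α (mtMul α W X) Y) Z) ∧
    (∀ A A' : ↥(sl2T U),
      mtMul α (A, (0 : Matrix (Fin 2) (Fin 2) U)) (A', (0 : Matrix (Fin 2) (Fin 2) U)) =
        (⟨(A : Matrix (Fin 2) (Fin 2) U) * (A' : Matrix (Fin 2) (Fin 2) U) -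
            (A' : Matrix (Fin 2) (Fin 2) U) * (A : Matrix (Fin 2) (Fin 2) U),
          comm_mem_sl2T _ _⟩, (0 : Matrix (Fin 2) (Fin 2) U))) :=
  stmt13_general α

end
end
end

section
/- Let B be a unital commutative associative algebra over F and consider the exceptional Malcev algebra M7(B) = sl2(B) ⊕ vM2(B). Identify V = B² inside vM2(B) by (a,b)(1) = v[[a,b],[0,0]] and (a,b)(2) = v[[0,0],[a,b]]. Then for all (a,b), (c,d) ∈ B²: (a,b)(1)·(c,d)(1) = −4(ad − bc)·F, (a,b)(1)·(c,d)(2) = (a,b)(2)·(c,d)(1) = −2(ad − bc)·H, (a,b)(2)·(c,d)(2) = −4(ad − bc)·E, where E = [[0,0],[1/2,0]], H = [[1/2,0],[0,−1/2]], F = [[0,−1/2],[0,0]]; furthermore the skew-symmetric B-bilinear map ⟨(a,b),(c,d)⟩ = −4(ad − bc) satisfies w⟨u,v⟩ + u⟨v,w⟩ + v⟨w,u⟩ = 0 for all u, v, w ∈ B². -/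
section
variable (K : Type*) [Field K] (B : Type*) [CommRing B] [Algebra K B]

variable (V : Type*) [AddCommGroup V] [Module B V]

section
variable (K : Type*) [Field K] (B : Type*) [CommRing B] [Algebra K B]

lemma tz_mem (p q r : B) : !![p, q; r, -p] ∈ sl2T B := by
  rw [sl2T, LinearMap.mem_ker, Matrix.traceLinearMap_apply, Matrix.trace_fin_two]
  simp

/-- `E = [[0,0],[1/2,0]]` as an element of `sl₂(B)` -/
noncomputable def Esl : ↥(sl2T B) :=
  ⟨!![0, 0; algebraMap K B 2⁻¹, 0], by simpa using tz_mem B 0 0 (algebraMap K B 2⁻¹)⟩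

/-- `H = [[1/2,0],[0,−1/2]]` as an element of `sl₂(B)` -/
noncomputable def Hsl : ↥(sl2T B) :=
  ⟨!![algebraMap K B 2⁻¹, 0; 0, -(algebraMap K B 2⁻¹)], tz_mem B _ 0 0⟩

/-- `F = [[0,−1/2],[0,0]]` as an element of `sl₂(B)` -/
noncomputable def Fsl : ↥(sl2T B) :=
  ⟨!![0, -(algebraMap K B 2⁻¹); 0, 0], by simpa using tz_mem B 0 (-(algebraMap K B 2⁻¹)) 0⟩

/-!
With `ω (a, b) (c, d) = ad − bc`, the entries of `AA'*` are, up to sign, the values of `ω` on a row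
of `A` and a row of `A'`. Since `ω` is alternating, the entries of `(vA)·(vA') = A'A* − AA'*` are
sums of two such values, and the coordinates on `E, H, F` can be read off. The cyclic identity
holds for every alternating form on `R²`, because each of them is a multiple of `ω`.
-/

section CommRing

variable {R : Type*} [CommRing R]

variable (R) in
/-- The standard alternating bilinear form `ω (a, b) (c, d) = ad − bc` on `R²`; the form `⟨u, v⟩` of
the theorem is `-4 • ω`. -/
def areaForm : LinearMap.BilinForm R (R × R) :=
  (LinearMap.mul R R).compl₁₂ (LinearMap.fst R R R) (LinearMap.snd R R R) -
    (LinearMap.mul R R).compl₁₂ (LinearMap.snd R R R) (LinearMap.fst R R R)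

lemma areaForm_apply (u v : R × R) : areaForm R u v = u.1 * v.2 - u.2 * v.1 := rfl

lemma areaForm_isAlt : (areaForm R).IsAlt := fun u => by
  rw [areaForm_apply, mul_comm, sub_self]

lemma areaForm_smul_cyclic (u v w : R × R) :
    areaForm R u v • w + areaForm R v w • u + areaForm R w u • v = 0 := by
  ext <;> simp only [areaForm_apply, Prod.fst_add, Prod.snd_add, Prod.smul_fst, Prod.smul_snd,
    smul_eq_mul, Prod.fst_zero, Prod.snd_zero] <;> ring

lemma eq_smul_areaForm_of_isAlt {β : LinearMap.BilinForm R (R × R)} (hβ : β.IsAlt) :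
    β = β (1, 0) (0, 1) • areaForm R := by
  have h_swap : β (0, 1) (1, 0) = -β (1, 0) (0, 1) := (hβ.neg_eq _ _).symm
  ext <;> simp [areaForm_apply, hβ.self_eq_zero, h_swap]

lemma smul_cyclic_of_isAlt {β : LinearMap.BilinForm R (R × R)} (hβ : β.IsAlt) (u v w : R × R) :
    β u v • w + β v w • u + β w u • v = 0 := by
  rw [eq_smul_areaForm_of_isAlt hβ]
  simp only [LinearMap.smul_apply, smul_assoc, ← smul_add, areaForm_smul_cyclic, smul_zero]

/-- The matrix with rows `u` and `v`; it encodes the element `u(1) + v(2)` of `vM₂(R)`, identifying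
`V ⊕ V` with `vM₂(R)` for `V = R²`. -/
def ofRows (u v : R × R) : Matrix (Fin 2) (Fin 2) R := !![u.1, u.2; v.1, v.2]

lemma ofRows_mul_sympl_ofRows (u₁ u₂ v₁ v₂ : R × R) :
    ofRows u₁ u₂ * sympl (ofRows v₁ v₂) =
      !![areaForm R u₁ v₂, -areaForm R u₁ v₁; areaForm R u₂ v₂, -areaForm R u₂ v₁] := by
  ext i j
  fin_cases i <;> fin_cases j <;> simp [ofRows, sympl, areaForm_apply] <;> ring

lemma coe_fst_m7Mul_zero (A A' : Matrix (Fin 2) (Fin 2) R) :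
    (m7Mul (0, A) (0, A')).1 = A' * sympl A - A * sympl A' := by
  simp [m7Mul, mtMul, mtMulMat]

lemma snd_m7Mul_zero (A A' : Matrix (Fin 2) (Fin 2) R) :
    (m7Mul (0, A) (0, A')).2 = 0 := by
  have sympl_zero : sympl (0 : Matrix (Fin 2) (Fin 2) R) = 0 := by simp [sympl, ← Matrix.ext_iff]
  simp [m7Mul, mtMul, sympl_zero]

end CommRing

section Product

variable {K}

lemma two_mul_algebraMap_inv_two (h2 : (2 : K) ≠ 0) : 2 * algebraMap K B 2⁻¹ = 1 := by
  rw [← map_ofNat (algebraMap K B) 2, ← map_mul, mul_inv_cancel₀ h2, map_one]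

lemma coe_smul_Fsl_add_smul_Hsl_add_smul_Esl (h2 : (2 : K) ≠ 0) (p q r : B) :
    (((-(2 * q)) • Fsl K B + (2 * p) • Hsl K B + (2 * r) • Esl K B : sl2T B) :
      Matrix (Fin 2) (Fin 2) B) = !![p, q; r, -p] := by
  have two_mul_mul_half (x : B) : 2 * x * algebraMap K B 2⁻¹ = x := by
    rw [mul_right_comm, two_mul_algebraMap_inv_two B h2, one_mul]
  ext i j
  fin_cases i <;> fin_cases j <;> simp [Esl, Hsl, Fsl, -map_inv₀, two_mul_mul_half]

lemma m7Mul_ofRows (h2 : (2 : K) ≠ 0) (u₁ u₂ v₁ v₂ : B × B) :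
    m7Mul (0, ofRows u₁ u₂) (0, ofRows v₁ v₂) =
      ((-4 * areaForm B u₁ v₁) • Fsl K B +
        (-2 * (areaForm B u₁ v₂ + areaForm B u₂ v₁)) • Hsl K B +
        (-4 * areaForm B u₂ v₂) • Esl K B, 0) := by
  have skew (u v : B × B) : areaForm B v u = -areaForm B u v := (areaForm_isAlt.neg_eq u v).symm
  refine Prod.ext (Subtype.ext ?_) (snd_m7Mul_zero _ _)
  calc ((m7Mul (0, ofRows u₁ u₂) (0, ofRows v₁ v₂)).1 : Matrix (Fin 2) (Fin 2) B)
      = ofRows v₁ v₂ * sympl (ofRows u₁ u₂) - ofRows u₁ u₂ * sympl (ofRows v₁ v₂) :=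
        coe_fst_m7Mul_zero _ _
    _ = !![-(areaForm B u₁ v₂ + areaForm B u₂ v₁), 2 * areaForm B u₁ v₁;
          -(2 * areaForm B u₂ v₂), - -(areaForm B u₁ v₂ + areaForm B u₂ v₁)] := by
        rw [ofRows_mul_sympl_ofRows, ofRows_mul_sympl_ofRows, skew u₁ v₁, skew u₁ v₂, skew u₂ v₁,
          skew u₂ v₂]
        ext i j
        fin_cases i <;> fin_cases j <;> simp <;> ring
    _ = _ := by
        rw [← coe_smul_Fsl_add_smul_Hsl_add_smul_Esl B h2]
        congr 1
        module

end Product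

theorem stmt17_general
    (h2 : (2 : K) ≠ 0) :
    (∀ a b c d : B,
      m7Mul ((0 : ↥(sl2T B)), !![a, b; 0, 0]) (0, !![c, d; 0, 0]) =
        ((-(4 : B) * (a * d - b * c)) • Fsl K B, 0) ∧
      m7Mul ((0 : ↥(sl2T B)), !![a, b; 0, 0]) (0, !![(0 : B), 0; c, d]) =
        ((-(2 : B) * (a * d - b * c)) • Hsl K B, 0) ∧
      m7Mul ((0 : ↥(sl2T B)), !![(0 : B), 0; a, b]) (0, !![c, d; 0, 0]) =
        ((-(2 : B) * (a * d - b * c)) • Hsl K B, 0) ∧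
      m7Mul ((0 : ↥(sl2T B)), !![(0 : B), 0; a, b]) (0, !![(0 : B), 0; c, d]) =
        ((-(4 : B) * (a * d - b * c)) • Esl K B, 0)) ∧
    (∀ u v : B × B,
      -(4 : B) * (u.1 * v.2 - u.2 * v.1) = -(-(4 : B) * (v.1 * u.2 - v.2 * u.1))) ∧
    (∀ u v w : B × B,
      (-(4 : B) * (u.1 * v.2 - u.2 * v.1)) • w + (-(4 : B) * (v.1 * w.2 - v.2 * w.1)) • u +
        (-(4 : B) * (w.1 * u.2 - w.2 * u.1)) • v = 0) := by
  have isAlt : (-(4 : B) • areaForm B).IsAlt := areaForm_isAlt.smul _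
  refine ⟨fun a b c d => ⟨?_, ?_, ?_, ?_⟩, fun u v => (isAlt.neg_eq v u).symm,
    smul_cyclic_of_isAlt isAlt⟩
  · simpa [ofRows, areaForm_apply] using m7Mul_ofRows B h2 (a, b) 0 (c, d) 0
  · simpa [ofRows, areaForm_apply] using m7Mul_ofRows B h2 (a, b) 0 0 (c, d)
  · simpa [ofRows, areaForm_apply] using m7Mul_ofRows B h2 0 (a, b) (c, d) 0
  · simpa [ofRows, areaForm_apply] using m7Mul_ofRows B h2 0 (a, b) 0 (c, d)

/-- In `M₇(B)` with `(a,b)(1) = v[[a,b],[0,0]]`,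
`(a,b)(2) = v[[0,0],[a,b]]`, the products of the `V`-elements are
`(a,b)(1)(c,d)(1) = −4(ad−bc)F`, `(a,b)(1)(c,d)(2) = (a,b)(2)(c,d)(1) = −2(ad−bc)H`,
`(a,b)(2)(c,d)(2) = −4(ad−bc)E`, and `⟨(a,b),(c,d)⟩ = −4(ad−bc)` is skew-symmetric and
satisfies `w⟨u,v⟩ + u⟨v,w⟩ + v⟨w,u⟩ = 0`. -/
theorem stmt17
    (h2 : (2 : K) ≠ 0) (h3 : (3 : K) ≠ 0) :
    (∀ a b c d : B,
      m7Mul ((0 : ↥(sl2T B)), !![a, b; 0, 0]) (0, !![c, d; 0, 0]) =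
        ((-(4 : B) * (a * d - b * c)) • Fsl K B, 0) ∧
      m7Mul ((0 : ↥(sl2T B)), !![a, b; 0, 0]) (0, !![(0 : B), 0; c, d]) =
        ((-(2 : B) * (a * d - b * c)) • Hsl K B, 0) ∧
      m7Mul ((0 : ↥(sl2T B)), !![(0 : B), 0; a, b]) (0, !![c, d; 0, 0]) =
        ((-(2 : B) * (a * d - b * c)) • Hsl K B, 0) ∧
      m7Mul ((0 : ↥(sl2T B)), !![(0 : B), 0; a, b]) (0, !![(0 : B), 0; c, d]) =
        ((-(4 : B) * (a * d - b * c)) • Esl K B, 0)) ∧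
    (∀ u v : B × B,
      -(4 : B) * (u.1 * v.2 - u.2 * v.1) = -(-(4 : B) * (v.1 * u.2 - v.2 * u.1))) ∧
    (∀ u v w : B × B,
      (-(4 : B) * (u.1 * v.2 - u.2 * v.1)) • w + (-(4 : B) * (v.1 * w.2 - v.2 * w.1)) • u +
        (-(4 : B) * (w.1 * u.2 - w.2 * u.1)) • v = 0) :=
  stmt17_general K B h2

end
end
end

section
/- Let M be a Malcev algebra over F lying in the variety H, containing L = sl2(F), and such that mL ≠ 0 for every nonzero m ∈ M, with N_M = sl2(U) for the commutative associative algebra U ⊆ Γ(M) and J_M = V(1) ⊕ V(2). Let X = aH + bF + cE + x(1) + y(2) and Y = dH + eF + fE + z(1) + t(2), where a,b,c,d,e,f ∈ U and x,y,z,t ∈ V. Then XY = [X_L, Y_L] + (1/2)(⟨x,t⟩ + ⟨y,z⟩)H + ⟨x,z⟩F + ⟨y,t⟩E + (−az + bt + dx − ey)(1) + (−cz + at + fx − dy)(2), where X_L = aH + bF + cE, Y_L = dH + eF + fE, and [X_L, Y_L] denotes their product in N_M. -/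
section
variable {K : Type*} [Field K] {M : Type*} [AddCommGroup M] [Module K M]

/-- the Jacobian `J(x,y,z) = (xy)z + (yz)x + (zx)y` -/
def mjac (μ : M →ₗ[K] M →ₗ[K] M) (x y z : M) : M :=
  μ (μ x y) z + μ (μ y z) x + μ (μ z x) y

/-- `{x,y,z} = (xy)z − (xz)y + 2·x(yz)` -/
def mbr (μ : M →ₗ[K] M →ₗ[K] M) (x y z : M) : M :=
  μ (μ x y) z - μ (μ x z) y + (2 : K) • μ x (μ y z)

/-- `h(y,z,t,x,u) = {yz,t,u}x + {yz,t,x}u + {yx,z,u}t + {yu,z,x}t` -/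
def mh (μ : M →ₗ[K] M →ₗ[K] M) (y z t x u : M) : M :=
  μ (mbr μ (μ y z) t u) x + μ (mbr μ (μ y z) t x) u +
    μ (mbr μ (μ y x) z u) t + μ (mbr μ (μ y u) z x) t

/-- A Malcev algebra structure: anticommutative (`x·x = 0`) together with the Malcev
identity `(xz)(yt) = ((xy)z)t + ((yz)t)x + ((zt)x)y + ((tx)y)z`. -/
def IsMalcev (μ : M →ₗ[K] M →ₗ[K] M) : Prop :=
  (∀ x, μ x x = 0) ∧
    ∀ x y z t, μ (μ x z) (μ y t) =
      μ (μ (μ x y) z) t + μ (μ (μ y z) t) x + μ (μ (μ z t) x) y + μ (μ (μ t x) y) z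

/-- the variety 𝓗 : `h(y,z,t,x,u) = 0` identically -/
def InVarietyH (μ : M →ₗ[K] M →ₗ[K] M) : Prop := ∀ y z t x u, mh μ y z t x u = 0

/-- `N_M = {m | J(m,a,b) = 0 ∀ a,b ∈ L}` -/
def NMset (μ : M →ₗ[K] M →ₗ[K] M) (L : Submodule K M) : Set M :=
  {m : M | ∀ a ∈ L, ∀ b ∈ L, mjac μ m a b = 0}

/-- `J_M = {m | {m,a,b} = 0 ∀ a,b ∈ L}` -/
def JMset (μ : M →ₗ[K] M →ₗ[K] M) (L : Submodule K M) : Set M :=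
  {m : M | ∀ a ∈ L, ∀ b ∈ L, mbr μ m a b = 0}

/-- the centroid Γ(M): linear operators commuting with all multiplications -/
def centroid (μ : M →ₗ[K] M →ₗ[K] M) : Set (Module.End K M) :=
  {α | ∀ x y : M, α (μ x y) = μ x (α y) ∧ α (μ x y) = μ (α x) y}

/-- `p(x,y,z,t) = −{zt,x,y} − {yt,z,x} + {xt,y,z}` -/
def pfun (μ : M →ₗ[K] M →ₗ[K] M) (x y z t : M) : M :=
  -(mbr μ (μ z t) x y) - mbr μ (μ y t) z x + mbr μ (μ x t) y z

/-- `U`: the span of the operators `α(y,a,b) : x ↦ p(x,y,a,b)` with `y ∈ M`, `a,b ∈ L` -/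
def Uspan (μ : M →ₗ[K] M →ₗ[K] M) (L : Submodule K M) : Submodule K (Module.End K M) :=
  Submodule.span K {φ : Module.End K M | ∃ y : M, ∃ a ∈ L, ∃ b ∈ L, ∀ x, φ x = pfun μ x y a b}

/-- `N_M = L·U`: the span of the elements `aα`, `a ∈ L`, `α ∈ U` -/
def NMspan (μ : M →ₗ[K] M →ₗ[K] M) (L : Submodule K M) : Submodule K M :=
  Submodule.span K {m : M | ∃ a ∈ L, ∃ φ ∈ Uspan μ L, m = φ a}

/-- the linear operator `m ↦ J(m,a,b)` -/
def jop (μ : M →ₗ[K] M →ₗ[K] M) (a b : M) : M →ₗ[K] M :=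
  μ.flip b ∘ₗ μ.flip a + μ (μ a b) + μ.flip a ∘ₗ μ b

/-- the linear operator `m ↦ {m,a,b}` -/
def bop (μ : M →ₗ[K] M →ₗ[K] M) (a b : M) : M →ₗ[K] M :=
  μ.flip b ∘ₗ μ.flip a - μ.flip a ∘ₗ μ.flip b + (2 : K) • μ.flip (μ a b)

/-- `N_M` as a submodule (intersection of the kernels of `m ↦ J(m,a,b)`, `a,b ∈ L`) -/
def NMker (μ : M →ₗ[K] M →ₗ[K] M) (L : Submodule K M) : Submodule K M :=
  ⨅ (a : M) (_ : a ∈ L) (b : M) (_ : b ∈ L), LinearMap.ker (jop μ a b)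

/-- `J_M` as a submodule (intersection of the kernels of `m ↦ {m,a,b}`, `a,b ∈ L`) -/
def JMker (μ : M →ₗ[K] M →ₗ[K] M) (L : Submodule K M) : Submodule K M :=
  ⨅ (a : M) (_ : a ∈ L) (b : M) (_ : b ∈ L), LinearMap.ker (bop μ a b)

/-- `Ann_M L` as a set -/
def AnnSet (μ : M →ₗ[K] M →ₗ[K] M) (L : Submodule K M) : Set M :=
  {m : M | ∀ a ∈ L, μ m a = 0}

/-- `Ann_M L` as a submodule -/
def Annker (μ : M →ₗ[K] M →ₗ[K] M) (L : Submodule K M) : Submodule K M :=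
  ⨅ (a : M) (_ : a ∈ L), LinearMap.ker (μ.flip a)

/-- `V = {w ∈ J_M : wH = w, wF = 0}` as a set -/
def Vset (μ : M →ₗ[K] M →ₗ[K] M) (L : Submodule K M) (Hm Fm : M) : Set M :=
  {w : M | w ∈ JMset μ L ∧ μ w Hm = w ∧ μ w Fm = 0}

/-- `V = {w ∈ J_M : wH = w, wF = 0}` as a submodule -/
def Vsub (μ : M →ₗ[K] M →ₗ[K] M) (L : Submodule K M) (Hm Fm : M) : Submodule K M :=
  JMker μ L ⊓ LinearMap.ker (μ.flip Hm - LinearMap.id) ⊓ LinearMap.ker (μ.flip Fm)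

/-!
In every Malcev algebra the defect `p(xu, y, z, t) - p(x, y, z, t)u` is a combination of three
values of `h`; in `𝓗` it therefore vanishes, so the operators in `U` lie in the centroid and scalars
can be pulled out of products. For `w ∈ V` the action of `sl₂` on `w` and `wE` then follows from
`{w, E, H} = {w, E, F} = 0`, except that `(wE)E = 0` needs the Malcev identity, which makes `(wE)E`
an eigenvector of right multiplication by `H` for both eigenvalues `3` and `0`. The formula is the
bilinear expansion of `XY`.
-/

section Centroid

variable {μ : M →ₗ[K] M →ₗ[K] M}

theorem IsMalcev.skew (hMal : IsMalcev μ) (x y : M) : μ x y = -μ y x :=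
  (LinearMap.IsAlt.neg (B := μ) hMal.1 y x).symm

-- The polarization in `x, z` of Sagle's identity `(ax)(yx) = ((ay)x)x + ((yx)x)a + ((xa)y)x`.
theorem IsMalcev.sagle_polarized (hMal : IsMalcev μ) (a x y z : M) :
    μ (μ a x) (μ y z) + μ (μ a z) (μ y x) =
      μ (μ (μ a y) x) z + μ (μ (μ a y) z) x + μ (μ (μ y x) z) a + μ (μ (μ y z) x) a +
        μ (μ (μ z a) y) x + μ (μ (μ x a) y) z := by
  rw [hMal.2 a y x z, hMal.2 a y z x, hMal.skew z x, map_neg, LinearMap.neg_apply, map_neg,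
    LinearMap.neg_apply]
  abel

theorem IsMalcev.pfun_mul_sub (hMal : IsMalcev μ) (x y z t u : M) :
    pfun μ (μ x u) y z t - μ (pfun μ x y z t) u =
      mh μ x t z y u + mh μ y z u x t - mh μ t u y x z := by
  have hxy := hMal.sagle_polarized (μ x y) z t u
  have hyz := hMal.sagle_polarized (μ y z) x u t
  have hzt := hMal.sagle_polarized (μ z t) y x u
  have htu := hMal.sagle_polarized (μ t u) x y z
  have hz := hMal.sagle_polarized z (μ x u) y t
  have ht := hMal.sagle_polarized t (μ x u) z y
  simp only [mh, pfun, mbr, map_add, map_sub, map_neg, two_smul, LinearMap.add_apply,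
    LinearMap.sub_apply, LinearMap.neg_apply] at hxy hyz hzt htu hz ht ⊢
  -- Anticommutativity orders each product: longer factor first, then variables as `x, y, z, t, u`.
  simp only [hMal.skew y x, hMal.skew z x, hMal.skew t x, hMal.skew u x, hMal.skew z y,
    hMal.skew t y, hMal.skew t z, hMal.skew u z, hMal.skew u t,
    fun b c => hMal.skew x (μ b c), fun b c => hMal.skew y (μ b c),
    fun b c => hMal.skew z (μ b c), fun b c => hMal.skew t (μ b c),
    fun b c => hMal.skew u (μ b c), hMal.skew (μ y z) (μ x u), hMal.skew (μ y t) (μ x z),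
    hMal.skew (μ y t) (μ x u), hMal.skew (μ z t) (μ x y), hMal.skew (μ z t) (μ x u),
    hMal.skew (μ t u) (μ x y), hMal.skew (μ t u) (μ y z),
    fun a b c d e => hMal.skew (μ a b) (μ (μ c d) e), map_neg,
    LinearMap.neg_apply] at hxy hyz hzt htu hz ht ⊢
  linear_combination (norm := module) hxy + hyz - hzt - htu + hz + ht

theorem pfun_mul (hMal : IsMalcev μ) (hVarH : InVarietyH μ) (x y z t u : M) :
    pfun μ (μ x u) y z t = μ (pfun μ x y z t) u := by
  rw [← sub_eq_zero, hMal.pfun_mul_sub, hVarH, hVarH, hVarH, add_zero, sub_zero]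

theorem IsMalcev.mem_centroid_of_map_mul (hMal : IsMalcev μ) {φ : Module.End K M}
    (hφ : ∀ x y, φ (μ x y) = μ (φ x) y) : φ ∈ centroid μ :=
  fun x y => ⟨by rw [hMal.skew, map_neg, hφ, ← hMal.skew], hφ x y⟩

theorem mem_centroid_of_mem_Uspan (hMal : IsMalcev μ) (hVarH : InVarietyH μ)
    {L : Submodule K M} {φ : Module.End K M} (hφ : φ ∈ Uspan μ L) : φ ∈ centroid μ := by
  refine hMal.mem_centroid_of_map_mul ?_
  induction hφ using Submodule.span_induction with
  | mem φ h =>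
    obtain ⟨y, a, -, b, -, hp⟩ := h
    exact fun x u => by rw [hp, hp, pfun_mul hMal hVarH]
  | zero => simp
  | add φ ψ _ _ hφ hψ => simp [hφ, hψ]
  | smul k φ _ hφ => simp [hφ]

end Centroid

section Doublet

variable {μ : M →ₗ[K] M →ₗ[K] M} {L : Submodule K M} {E H F w : M}

theorem mul_E_mul_H_of_mem_Vset (hE : E ∈ L) (hH : H ∈ L) (hEH : μ E H = E)
    (hw : w ∈ Vset μ L H F) : μ (μ w E) H = -μ w E := by
  obtain ⟨hJ, hwH, -⟩ := hw
  have h : mbr μ w E H = 0 := hJ E hE H hH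
  rw [mbr, hwH, hEH] at h
  linear_combination (norm := module) h

theorem mul_E_mul_F_of_mem_Vset (h2 : (2 : K) ≠ 0) (hE : E ∈ L) (hF : F ∈ L)
    (hEF : μ E F = (2⁻¹ : K) • H) (hw : w ∈ Vset μ L H F) : μ (μ w E) F = -w := by
  obtain ⟨hJ, hwH, hwF⟩ := hw
  have h : mbr μ w E F = 0 := hJ E hE F hF
  rw [mbr, hwF, hEF, map_smul, hwH, smul_inv_smul₀ h2, map_zero, LinearMap.zero_apply] at h
  linear_combination (norm := module) h

theorem mul_E_mul_E_of_mem_Vset (h3 : (3 : K) ≠ 0) (hMal : IsMalcev μ) (hE : E ∈ L)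
    (hH : H ∈ L) (hEH : μ E H = E) (hw : w ∈ Vset μ L H F) : μ (μ w E) E = 0 := by
  have hwH : μ w H = w := hw.2.1
  have weight : μ (μ (μ w E) E) H = (3 : K) • μ (μ w E) E := by
    have h := hMal.2 w E E H
    simp only [hEH, hMal.1, hMal.skew E w, hMal.skew H w, hwH, map_neg, map_zero,
      LinearMap.neg_apply, LinearMap.zero_apply] at h
    linear_combination (norm := module) -h
  have weight_zero : μ (μ (μ w E) E) H = 0 := by
    have hwEH := mul_E_mul_H_of_mem_Vset hE hH hEH hw
    have h := hMal.2 w E H E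
    simp only [hEH, hwEH, hMal.1, hMal.skew H E, hMal.skew E w, map_neg, map_zero,
      LinearMap.neg_apply, LinearMap.zero_apply] at h
    linear_combination (norm := module) h
  exact (smul_eq_zero.mp (weight.symm.trans weight_zero)).resolve_left h3

theorem sl2_mul_doublet (h2 : (2 : K) ≠ 0) (h3 : (3 : K) ≠ 0) (hMal : IsMalcev μ)
    (hEH : μ E H = E) (hEF : μ E F = (2⁻¹ : K) • H) (hE : E ∈ L) (hH : H ∈ L) (hF : F ∈ L)
    {a b c : Module.End K M} (ha : a ∈ centroid μ) (hb : b ∈ centroid μ) (hc : c ∈ centroid μ)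
    {z t : M} (hz : z ∈ Vset μ L H F) (ht : t ∈ Vset μ L H F) :
    μ (a H + b F + c E) (z + μ t E) = -(a z) + b t + μ (-(c z) + a t) E := by
  have hHt : μ H (μ t E) = μ t E := by
    rw [hMal.skew, mul_E_mul_H_of_mem_Vset hE hH hEH ht, neg_neg]
  have hFt : μ F (μ t E) = t := by
    rw [hMal.skew, mul_E_mul_F_of_mem_Vset h2 hE hF hEF ht, neg_neg]
  have hEt : μ E (μ t E) = 0 := by
    rw [hMal.skew, mul_E_mul_E_of_mem_Vset h3 hMal hE hH hEH ht, neg_zero]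
  simp only [map_add, map_neg, map_zero, LinearMap.add_apply, LinearMap.neg_apply,
    ← (ha _ _).2, ← (hb _ _).2, ← (hc _ _).2, hMal.skew H z, hMal.skew F z, hMal.skew E z,
    hz.2.1, hz.2.2, hHt, hFt, hEt]
  abel

theorem stmt19_general (h2 : (2 : K) ≠ 0) (h3 : (3 : K) ≠ 0) (hMal : IsMalcev μ)
    (hEH : μ E H = E) (hEF : μ E F = (2⁻¹ : K) • H) (hL : {E, H, F} ⊆ (L : Set M))
    {bk : M → M → Module.End K M}
    (hbk : ∀ u ∈ Vset μ L H F, ∀ v ∈ Vset μ L H F,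
      μ u v = bk u v F ∧
      μ u (μ v E) = (2⁻¹ : K) • (bk u v H) ∧
      μ (μ u E) v = (2⁻¹ : K) • (bk u v H) ∧
      μ (μ u E) (μ v E) = bk u v E)
    {a b c d e f : Module.End K M}
    (ha : a ∈ centroid μ) (hb : b ∈ centroid μ) (hc : c ∈ centroid μ)
    (hd : d ∈ centroid μ) (he : e ∈ centroid μ) (hf : f ∈ centroid μ)
    {x y z t : M}
    (hx : x ∈ Vset μ L H F) (hy : y ∈ Vset μ L H F)
    (hz : z ∈ Vset μ L H F) (ht : t ∈ Vset μ L H F) :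
    μ (a H + b F + c E + x + μ y E) (d H + e F + f E + z + μ t E) =
      μ (a H + b F + c E) (d H + e F + f E)
        + (2⁻¹ : K) • ((bk x t + bk y z) H)
        + bk x z F + bk y t E
        + (-(a z) + b t + d x - e y)
        + μ (-(c z) + a t + f x - d y) E := by
  obtain ⟨hE, hH, hF⟩ : E ∈ L ∧ H ∈ L ∧ F ∈ L := by simpa [Set.insert_subset_iff] using hL
  have hXL := sl2_mul_doublet h2 h3 hMal hEH hEF hE hH hF ha hb hc hz ht
  have hYL := sl2_mul_doublet h2 h3 hMal hEH hEF hE hH hF hd he hf hx hy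
  have hV : μ (x + μ y E) (z + μ t E) =
      (2⁻¹ : K) • ((bk x t + bk y z) H) + bk x z F + bk y t E := by
    simp only [map_add, LinearMap.add_apply, (hbk x hx z hz).1, (hbk x hx t ht).2.1,
      (hbk y hy z hz).2.2.1, (hbk y hy t ht).2.2.2]
    module
  set XL := a H + b F + c E
  set YL := d H + e F + f E
  calc μ (XL + x + μ y E) (YL + z + μ t E)
    _ = μ XL YL + μ (x + μ y E) (z + μ t E) + μ XL (z + μ t E) - μ YL (x + μ y E) := by
      rw [hMal.skew YL]
      simp only [map_add, LinearMap.add_apply]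
      abel
    _ = _ := by
      rw [hV, hXL, hYL]
      simp only [map_add, map_sub, map_neg, LinearMap.add_apply, LinearMap.sub_apply,
        LinearMap.neg_apply]
      abel

end Doublet

/-- The explicit multiplication formula on
`M = sl₂(U) ⊕ V(1) ⊕ V(2)`: for `X = aH + bF + cE + x(1) + y(2)` and
`Y = dH + eF + fE + z(1) + t(2)`,
`XY = [X_L,Y_L] + ½(⟨x,t⟩+⟨y,z⟩)H + ⟨x,z⟩F + ⟨y,t⟩E + (−az+bt+dx−ey)(1) + (−cz+at+fx−dy)(2)`. -/
theorem stmt19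
    (h2 : (2 : K) ≠ 0) (h3 : (3 : K) ≠ 0)
    (μ : M →ₗ[K] M →ₗ[K] M) (hMal : IsMalcev μ) (hVarH : InVarietyH μ)
    (E H F : M) (hind : LinearIndependent K ![E, H, F])
    (hEH : μ E H = E) (hFH : μ F H = -F) (hEF : μ E F = (2⁻¹ : K) • H)
    (L : Submodule K M) (hL : L = Submodule.span K {E, H, F})
    (hfaith : ∀ m : M, m ≠ 0 → ∃ a ∈ L, μ m a ≠ 0)
    (bk : M → M → Module.End K M)
    (hbk : ∀ u ∈ Vset μ L H F, ∀ v ∈ Vset μ L H F,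
      bk u v ∈ Uspan μ L ∧
      μ u v = bk u v F ∧
      μ u (μ v E) = (2⁻¹ : K) • (bk u v H) ∧
      μ (μ u E) v = (2⁻¹ : K) • (bk u v H) ∧
      μ (μ u E) (μ v E) = bk u v E)
    (a b c d e f : Module.End K M)
    (ha : a ∈ Uspan μ L) (hb : b ∈ Uspan μ L) (hc : c ∈ Uspan μ L)
    (hd : d ∈ Uspan μ L) (he : e ∈ Uspan μ L) (hf : f ∈ Uspan μ L)
    (x y z t : M)
    (hx : x ∈ Vset μ L H F) (hy : y ∈ Vset μ L H F)
    (hz : z ∈ Vset μ L H F) (ht : t ∈ Vset μ L H F)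
    (XL YL X Y : M)
    (hXL : XL = a H + b F + c E) (hYL : YL = d H + e F + f E)
    (hX : X = XL + x + μ y E) (hY : Y = YL + z + μ t E) :
    μ X Y = μ XL YL
      + (2⁻¹ : K) • ((bk x t + bk y z) H)
      + bk x z F + bk y t E
      + (-(a z) + b t + d x - e y)
      + μ (-(c z) + a t + f x - d y) E := by
  subst hXL hYL hX hY
  have cen {φ : Module.End K M} (hφ : φ ∈ Uspan μ L) := mem_centroid_of_mem_Uspan hMal hVarH hφ
  exact stmt19_general h2 h3 hMal hEH hEF (hL ▸ Submodule.subset_span)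
    (fun u hu v hv => (hbk u hu v hv).2) (cen ha) (cen hb) (cen hc) (cen hd) (cen he) (cen hf)
    hx hy hz ht

end
end
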